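/- For polynomial curves γ₁, γ₂ : [0,1] → ℝ^d, the function f(t₁,t₂) = ‖γ₁(t₁) − γ₂(t₂)‖₂² has only finitely many critical values. -/

import Mathlib

/-!
The argument is algebraic. Let `P` be a prime ideal containing all partial derivatives of a
polynomial `F` over a field `k` of characteristic zero. The differential of `F` vanishes in the
Kähler differentials over `k` of the fraction field of `k[x] ⧸ P`, which in characteristic zero
forces `F` to be algebraic over `k` modulo `P`. Multiplying the resulting relations over the
finitely many minimal primes of the Jacobian ideal `(∂ᵢF)ᵢ` gives a nonzero `g ∈ k[T]` such that
`g(F)` lies in its radical, and every critical value of `F` is a root of `g`.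
-/

open Polynomial TensorProduct KaehlerDifferential

section Differentials

theorem injective_mapBaseChange_of_formallySmooth (R S T : Type*) [CommRing R] [CommRing S]
    [CommRing T] [Algebra R S] [Algebra R T] [Algebra S T] [IsScalarTower R S T]
    [Algebra.FormallySmooth S T] : Function.Injective (mapBaseChange R S T) := by
  rw [injective_iff_map_eq_zero]
  intro y hy
  obtain ⟨z, rfl⟩ := (Algebra.H1Cotangent.exact_δ_mapBaseChange R S T y).mp hy
  rw [Subsingleton.elim z 0, map_zero]

theorem formallySmooth_field_of_charZero (k K : Type*) [Field k] [CharZero k] [Field K]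
    [Algebra k K] : Algebra.FormallySmooth k K := by
  obtain ⟨s, hs⟩ := exists_isTranscendenceBasis k K
  have := hs.isAlgebraic_field
  exact .of_algebraicIndependent_of_isSeparable hs.1

theorem formallySmooth_of_faithfulSMul_field (R K : Type*) [CommRing R] [Field K] [CharZero K]
    [Algebra R K] [FaithfulSMul R K] : Algebra.FormallySmooth R K := by
  have : IsDomain R := (FaithfulSMul.algebraMap_injective R K).isDomain
  let := FractionRing.liftAlgebra R K
  have : CharZero (FractionRing R) := (algebraMap (FractionRing R) K).charZero
  have : Algebra.FormallySmooth R (FractionRing R) := .of_isLocalization (nonZeroDivisors R)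
  have := formallySmooth_field_of_charZero (FractionRing R) K
  exact .comp R (FractionRing R) K

theorem isAlgebraic_of_D_eq_zero {k K : Type*} [CommRing k] [Field K] [CharZero K] [Algebra k K]
    {a : K} (ha : D k K a = 0) : IsAlgebraic k a := by
  by_contra htrans
  let := (aeval (R := k) a).toAlgebra
  have algebraMap_X : algebraMap k[X] K X = a := aeval_X a
  have : IsScalarTower k k[X] K := .of_algHom (aeval a)
  have : FaithfulSMul k[X] K :=
    (faithfulSMul_iff_algebraMap_injective _ _).mpr (transcendental_iff_injective.mp htrans)
  have := formallySmooth_of_faithfulSMul_field k[X] K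
  have one_tmul_D_X : (1 : K) ⊗ₜ[k[X]] D k k[X] X = 0 :=
    injective_mapBaseChange_of_formallySmooth k k[X] K (by simp [algebraMap_X, ha])
  have one_eq_zero :=
    congr(TensorProduct.rid k[X] K ((polynomialEquiv k).toLinearMap.lTensor K $one_tmul_D_X))
  simp at one_eq_zero

theorem D_algebraMap_mvPolynomial_eq_zero {k σ A : Type*} [CommRing k] [CommRing A] [Algebra k A]
    [Algebra (MvPolynomial σ k) A] [IsScalarTower k (MvPolynomial σ k) A] {F : MvPolynomial σ k}
    (hF : ∀ i, algebraMap (MvPolynomial σ k) A (MvPolynomial.pderiv i F) = 0) :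
    D k A (algebraMap (MvPolynomial σ k) A F) = 0 := by
  rw [← map_D k k (MvPolynomial σ k) A, ← (mvPolynomialBasis k σ).linearCombination_repr (D k _ F),
    Finsupp.linearCombination_apply, Finsupp.sum, map_sum]
  refine Finset.sum_eq_zero fun i _ ↦ ?_
  rw [map_smul, mvPolynomialBasis_repr_apply, ← algebraMap_smul A, hF, zero_smul]

end Differentials

section CriticalValues

variable {k σ : Type*} [Field k]

theorem exists_aeval_mem_of_pderiv_mem_isPrime [CharZero k] {F : MvPolynomial σ k}
    {P : Ideal (MvPolynomial σ k)} [P.IsPrime] (hF : ∀ i, MvPolynomial.pderiv i F ∈ P) :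
    ∃ g : k[X], g ≠ 0 ∧ aeval F g ∈ P := by
  let K := FractionRing (MvPolynomial σ k ⧸ P)
  have algebraMap_eq_zero_iff (G : MvPolynomial σ k) :
      algebraMap (MvPolynomial σ k) K G = 0 ↔ G ∈ P := by
    rw [IsScalarTower.algebraMap_apply _ (MvPolynomial σ k ⧸ P) K,
      FaithfulSMul.algebraMap_eq_zero_iff]
    exact Ideal.Quotient.eq_zero_iff_mem
  have : CharZero K := charZero_of_injective_algebraMap (algebraMap k K).injective
  have isAlgebraic_F : IsAlgebraic k (algebraMap (MvPolynomial σ k) K F) :=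
    isAlgebraic_of_D_eq_zero
      (D_algebraMap_mvPolynomial_eq_zero fun i ↦ (algebraMap_eq_zero_iff _).mpr (hF i))
  obtain ⟨g, hg, hgF⟩ := isAlgebraic_F
  exact ⟨g, hg, (algebraMap_eq_zero_iff _).mp (by rwa [← aeval_algebraMap_apply])⟩

theorem exists_aeval_mem_radical_of_pderiv_mem [CharZero k] [Finite σ] {F : MvPolynomial σ k}
    {I : Ideal (MvPolynomial σ k)} (hF : ∀ i, MvPolynomial.pderiv i F ∈ I) :
    ∃ g : k[X], g ≠ 0 ∧ aeval F g ∈ I.radical := by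
  have exists_aeval_mem (P : Ideal (MvPolynomial σ k)) (hP : P ∈ I.minimalPrimes) :
      ∃ g : k[X], g ≠ 0 ∧ aeval F g ∈ P :=
    have := hP.isPrime
    exists_aeval_mem_of_pderiv_mem_isPrime fun i ↦ hP.le (hF i)
  choose! g g_ne_zero aeval_g_mem using exists_aeval_mem
  have finite_minimalPrimes := I.finite_minimalPrimes_of_isNoetherianRing
  refine ⟨∏ P ∈ finite_minimalPrimes.toFinset, g P, ?_, ?_⟩
  · simpa [Finset.prod_ne_zero_iff] using g_ne_zero
  · rw [← Ideal.sInf_minimalPrimes, Ideal.mem_sInf, map_prod]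
    intro P hP
    exact P.mem_of_dvd (Finset.dvd_prod_of_mem _ (finite_minimalPrimes.mem_toFinset.mpr hP))
      (aeval_g_mem P hP)

/-- The critical points of a polynomial in several variables, defined over an arbitrary field as
the common zeros of its formal partial derivatives. -/
def criticalPoints (F : MvPolynomial σ k) : Set (σ → k) :=
  {x | ∀ i, MvPolynomial.eval x (MvPolynomial.pderiv i F) = 0}

theorem finite_image_eval_criticalPoints [CharZero k] [Finite σ] (F : MvPolynomial σ k) :
    ((fun x ↦ MvPolynomial.eval x F) '' criticalPoints F).Finite := by
  let jacobianIdeal := Ideal.span (Set.range fun i ↦ MvPolynomial.pderiv i F)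
  obtain ⟨g, hg, hgF⟩ := exists_aeval_mem_radical_of_pderiv_mem (F := F) (I := jacobianIdeal)
    fun i ↦ Ideal.subset_span ⟨i, rfl⟩
  refine (finite_setOfPred_isRoot hg).subset ?_
  rintro _ ⟨x, hx, rfl⟩
  have jacobianIdeal_le : jacobianIdeal ≤ RingHom.ker (MvPolynomial.aeval x) :=
    Ideal.span_le.mpr (Set.range_subset_iff.mpr hx)
  have aeval_aeval_eq_zero : MvPolynomial.aeval x (aeval F g) = 0 :=
    (RingHom.ker_isPrime _).isRadical.radical_le_iff.mpr jacobianIdeal_le hgF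
  rwa [← aeval_algHom_apply, MvPolynomial.aeval_eq_eval, coe_aeval_eq_eval] at aeval_aeval_eq_zero

end CriticalValues

section Analysis

variable {𝕜 σ : Type*} [NontriviallyNormedField 𝕜]

theorem hasFDerivAt_mvPolynomial_eval [Fintype σ] (F : MvPolynomial σ 𝕜) (x : σ → 𝕜) :
    HasFDerivAt (fun y : σ → 𝕜 ↦ MvPolynomial.eval y F)
      (∑ i, (ContinuousLinearMap.proj i : (σ → 𝕜) →L[𝕜] 𝕜).smulRight
        (MvPolynomial.eval x (MvPolynomial.pderiv i F))) x := by
  classical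
  induction F using MvPolynomial.induction_on with
  | C a => simpa using hasFDerivAt_const (𝕜 := 𝕜) a x
  | add p q hp hq =>
    simp only [map_add]
    refine (hp.fun_add hq).congr_fderiv ?_
    ext v
    simp [mul_add, Finset.sum_add_distrib]
  | mul_X p i hp =>
    simp only [map_mul, MvPolynomial.eval_X]
    refine (hp.mul (hasFDerivAt_apply (𝕜 := 𝕜) (F' := fun _ : σ ↦ 𝕜) i x)).congr_fderiv ?_
    ext v
    simp [MvPolynomial.pderiv_X, Pi.single_apply, apply_ite (MvPolynomial.eval x), mul_add,
      Finset.sum_add_distrib, Finset.mul_sum, mul_comm, mul_left_comm]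

variable [Finite σ]

theorem fderiv_mvPolynomial_eval_eq_zero_iff {F : MvPolynomial σ 𝕜} {x : σ → 𝕜} :
    fderiv 𝕜 (fun y ↦ MvPolynomial.eval y F) x = 0 ↔ x ∈ criticalPoints F := by
  classical
  cases nonempty_fintype σ
  rw [(hasFDerivAt_mvPolynomial_eval F x).fderiv]
  refine ⟨fun h i ↦ ?_, fun h ↦ Finset.sum_eq_zero fun i _ ↦ ?_⟩
  · simpa [Pi.single_apply] using congr($h (Pi.single i 1))
  · rw [h i, ContinuousLinearMap.smulRight_zero]

theorem finite_image_fderiv_eq_zero_of_eq_mvPolynomial_eval [CharZero 𝕜] {E : Type*}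
    [NormedAddCommGroup E] [NormedSpace 𝕜 E] (e : E ≃L[𝕜] (σ → 𝕜)) (F : MvPolynomial σ 𝕜)
    {f : E → 𝕜} (hf : ∀ x, f x = MvPolynomial.eval (e x) F) :
    (f '' {x | fderiv 𝕜 f x = 0}).Finite := by
  cases nonempty_fintype σ
  obtain rfl : f = (fun y ↦ MvPolynomial.eval y F) ∘ e := funext hf
  refine (finite_image_eval_criticalPoints F).subset ?_
  rintro _ ⟨x, hx, rfl⟩
  refine ⟨e x, fderiv_mvPolynomial_eval_eq_zero_iff.mp ?_, rfl⟩
  rw [Set.mem_ofPred_eq, e.comp_right_fderiv] at hx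
  ext v
  simpa using congr($hx (e.symm v))

end Analysis

theorem mvPolynomial_eval_aeval_X {R σ : Type*} [CommSemiring R] (x : σ → R) (i : σ) (r : R[X]) :
    MvPolynomial.eval x (aeval (MvPolynomial.X i) r) = r.eval (x i) := by
  simpa using (aeval_algHom_apply (MvPolynomial.aeval x) (MvPolynomial.X i) r).symm

theorem stmt_11_general {𝕜 ι : Type*} [NontriviallyNormedField 𝕜] [CharZero 𝕜] [Fintype ι]
    (p q : ι → 𝕜[X]) (f : 𝕜 × 𝕜 → 𝕜)
    (hf : ∀ x : 𝕜 × 𝕜, f x = ∑ i, ((p i).eval x.1 - (q i).eval x.2) ^ 2) :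
    (f '' {x | fderiv 𝕜 f x = 0}).Finite := by
  let F : MvPolynomial (Fin 2) 𝕜 :=
    ∑ i, (aeval (MvPolynomial.X 0) (p i) - aeval (MvPolynomial.X 1) (q i)) ^ 2
  refine finite_image_fderiv_eq_zero_of_eq_mvPolynomial_eval
    (ContinuousLinearEquiv.finTwoArrow 𝕜 𝕜).symm F fun x ↦ ?_
  simp [hf, F, mvPolynomial_eval_aeval_X]

/-- For polynomial curves `γ₁ = (p i)ᵢ` and `γ₂ = (q i)ᵢ` in `ℝ^d`, the function
`f(t₁,t₂) = ‖γ₁ t₁ − γ₂ t₂‖₂² = ∑ᵢ (pᵢ(t₁) − qᵢ(t₂))²` has only finitely many critical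
values on `[0,1]²`. -/
theorem stmt_11 {d : ℕ} (p q : Fin d → Polynomial ℝ)
    (f : ℝ × ℝ → ℝ)
    (hf : ∀ x : ℝ × ℝ, f x = ∑ i, ((p i).eval x.1 - (q i).eval x.2) ^ 2) :
    (f '' {x : ℝ × ℝ | x ∈ Set.Icc (0:ℝ) 1 ×ˢ Set.Icc (0:ℝ) 1 ∧
        fderiv ℝ f x = 0}).Finite :=
  (stmt_11_general p q f hf).subset (Set.image_mono fun _ hx ↦ hx.2)
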